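/- arXiv:1105.0623 — 2 statements merged into one kernel-verified Lean document; each statement's English description precedes it below -/
import Mathlib

section
/- If (u, v, θ) is a solution of the RNC system, then for every real number h the scaled triple (ũ, ṽ, θ̃) defined by ũ(x,y) = e^h·u(e^{−h}x, y), ṽ(x,y) = v(e^{−h}x, y), θ̃(x,y) = e^h·θ(e^{−h}x, y) is also a solution of the RNC system (invariance under the one-parameter group g₃ : (x,y,u,v,t) ↦ (x e^h, y, u e^h, v, t e^h) generated by X₃ = x∂ₓ + u∂ᵤ + t∂ₜ, where t denotes the temperature variable θ). -/
/-- Partial derivative with respect to the first variable `x`. -/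
noncomputable def pdx (f : ℝ × ℝ → ℝ) (p : ℝ × ℝ) : ℝ := fderiv ℝ f p (1, 0)

/-- Partial derivative with respect to the second variable `y`. -/
noncomputable def pdy (f : ℝ × ℝ → ℝ) (p : ℝ × ℝ) : ℝ := fderiv ℝ f p (0, 1)

/-- The RNC system: `(u, v, θ)` are twice continuously differentiable and satisfy
(i) `uₓ + v_y = 0`, (ii) `u uₓ + v u_y = u_yy + Gr θ cos α`,
(iii) `u θₓ + v θ_y = (1/Pr)(1+4R) θ_yy`. -/
def IsRNCSolution (Gr α R Pr : ℝ) (u v θ : ℝ × ℝ → ℝ) : Prop :=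
  ContDiff ℝ 2 u ∧ ContDiff ℝ 2 v ∧ ContDiff ℝ 2 θ ∧
  (∀ p : ℝ × ℝ, pdx u p + pdy v p = 0) ∧
  (∀ p : ℝ × ℝ, u p * pdx u p + v p * pdy u p = pdy (pdy u) p + Gr * θ p * Real.cos α) ∧
  (∀ p : ℝ × ℝ, u p * pdx θ p + v p * pdy θ p = (1 / Pr) * (1 + 4 * R) * pdy (pdy θ) p)

/-- The dilation `(x, y) ↦ (c x, y)` of the plane. The factor is a unit, so that composing with
the dilation commutes with `fderiv` for arbitrary functions. -/
def xDilation (c : ℝˣ) : (ℝ × ℝ) ≃L[ℝ] ℝ × ℝ :=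
  (ContinuousLinearEquiv.unitsEquivAut ℝ c).prodCongr (.refl ℝ ℝ)

theorem xDilation_apply (c : ℝˣ) (p : ℝ × ℝ) : xDilation c p = (c * p.1, p.2) := by
  simp [xDilation, mul_comm]

section PartialDerivatives

variable (f : ℝ × ℝ → ℝ)

theorem pdx_const_smul (a : ℝ) : pdx (a • f) = a • pdx f := by
  ext p
  simp [pdx, fderiv_const_smul_field]

theorem pdy_const_smul (a : ℝ) : pdy (a • f) = a • pdy f := by
  ext p
  simp [pdy, fderiv_const_smul_field]

theorem pdx_comp_xDilation (c : ℝˣ) :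
    pdx (f ∘ xDilation c) = (c : ℝ) • (pdx f ∘ xDilation c) := by
  ext p
  have hdir : xDilation c (1, 0) = (c : ℝ) • (1, 0) := by simp [xDilation_apply]
  simp [pdx, ContinuousLinearEquiv.comp_right_fderiv, hdir, -Prod.smul_mk]

theorem pdy_comp_xDilation (c : ℝˣ) : pdy (f ∘ xDilation c) = pdy f ∘ xDilation c := by
  ext p
  simp [pdy, ContinuousLinearEquiv.comp_right_fderiv, xDilation_apply]

end PartialDerivatives

/-- The boundary-layer advection–diffusion equation `u fₓ + v f_y = κ f_yy + s` for a scalar `f`,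
with diffusion in `y` only. The momentum equation is the case `f = u`, the energy equation the
case `f = θ`. -/
def IsAdvectionDiffusionSolution (κ : ℝ) (u v s f : ℝ × ℝ → ℝ) : Prop :=
  ∀ p, u p * pdx f p + v p * pdy f p = κ * pdy (pdy f) p + s p

/- The dilation gives every `x`-derivative a factor `c⁻¹`, cancelled by the factor `c` on `u`; the
equation is linear in `(f, s)`, so these two may be rescaled by any common `a`. -/
theorem IsAdvectionDiffusionSolution.comp_xDilation {κ : ℝ} {u v s f : ℝ × ℝ → ℝ}
    (hf : IsAdvectionDiffusionSolution κ u v s f) (c : ℝˣ) (a : ℝ) :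
    IsAdvectionDiffusionSolution κ ((c : ℝ) • (u ∘ xDilation c⁻¹)) (v ∘ xDilation c⁻¹)
      (a • (s ∘ xDilation c⁻¹)) (a • (f ∘ xDilation c⁻¹)) := by
  intro p
  simp only [pdx_const_smul, pdy_const_smul, pdx_comp_xDilation, pdy_comp_xDilation,
    Pi.smul_apply, Function.comp_apply, smul_eq_mul]
  linear_combination a * hf (xDilation c⁻¹ p) +
    a * u (xDilation c⁻¹ p) * pdx f (xDilation c⁻¹ p) * c.mul_inv

theorem pdx_add_pdy_comp_xDilation (u v : ℝ × ℝ → ℝ) (c : ℝˣ) :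
    pdx ((c : ℝ) • (u ∘ xDilation c⁻¹)) + pdy (v ∘ xDilation c⁻¹) =
      (pdx u + pdy v) ∘ xDilation c⁻¹ := by
  rw [pdx_const_smul, pdx_comp_xDilation, pdy_comp_xDilation, smul_smul, c.mul_inv, one_smul]
  rfl

theorem isRNCSolution_iff {Gr α R Pr : ℝ} {u v θ : ℝ × ℝ → ℝ} :
    IsRNCSolution Gr α R Pr u v θ ↔
      ContDiff ℝ 2 u ∧ ContDiff ℝ 2 v ∧ ContDiff ℝ 2 θ ∧ pdx u + pdy v = 0 ∧
        IsAdvectionDiffusionSolution 1 u v ((Gr * Real.cos α) • θ) u ∧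
        IsAdvectionDiffusionSolution (1 / Pr * (1 + 4 * R)) u v 0 θ := by
  simp only [IsRNCSolution, IsAdvectionDiffusionSolution, funext_iff, Pi.add_apply, Pi.zero_apply,
    Pi.smul_apply, smul_eq_mul, one_mul, add_zero, mul_right_comm]

theorem rnc_invariant_under_g3_general (Gr α R Pr : ℝ) (_hPr : Pr ≠ 0)
    (u v θ : ℝ × ℝ → ℝ) (hsol : IsRNCSolution Gr α R Pr u v θ) (c : ℝˣ) :
    IsRNCSolution Gr α R Pr
      ((c : ℝ) • (u ∘ xDilation c⁻¹)) (v ∘ xDilation c⁻¹) ((c : ℝ) • (θ ∘ xDilation c⁻¹)) := by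
  obtain ⟨hu, hv, hθ, hcont, hmom, henergy⟩ := isRNCSolution_iff.mp hsol
  have hdil : ContDiff ℝ 2 (xDilation c⁻¹) := (xDilation c⁻¹).contDiff
  refine isRNCSolution_iff.mpr
    ⟨contDiff_const.smul (hu.comp hdil), hv.comp hdil, contDiff_const.smul (hθ.comp hdil),
      ?_, ?_, ?_⟩
  · rw [pdx_add_pdy_comp_xDilation, hcont, Pi.zero_comp]
  · rw [smul_comm]
    exact hmom.comp_xDilation c c
  · simpa using henergy.comp_xDilation c c

/-- invariance of the RNC system under the scaling group
`g₃(h) : (x, y, u, v, t) ↦ (x e^h, y, u e^h, v, t e^h)` generated by `X₃ = x∂ₓ + u∂ᵤ + t∂ₜ`. -/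
theorem rnc_invariant_under_g3 (Gr α R Pr : ℝ) (hPr : Pr ≠ 0)
    (u v θ : ℝ × ℝ → ℝ) (hsol : IsRNCSolution Gr α R Pr u v θ) (h : ℝ) :
    IsRNCSolution Gr α R Pr
      (fun p => Real.exp h * u (Real.exp (-h) * p.1, p.2))
      (fun p => v (Real.exp (-h) * p.1, p.2))
      (fun p => Real.exp h * θ (Real.exp (-h) * p.1, p.2)) := by
  simpa [Function.comp_def, Pi.smul_def, xDilation_apply, Real.exp_neg] using
    rnc_invariant_under_g3_general Gr α R Pr hPr u v θ hsol (Units.mk0 _ (Real.exp_ne_zero h))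
end

section
/- If (u, v, θ) is a solution of the RNC system, then for every real number h the scaled triple (ũ, ṽ, θ̃) defined by ũ(x,y) = u(e^{−2h}x, e^{−h}y), ṽ(x,y) = e^{−h}·v(e^{−2h}x, e^{−h}y), θ̃(x,y) = e^{−2h}·θ(e^{−2h}x, e^{−h}y) is also a solution of the RNC system (invariance under the one-parameter group g₄ : (x,y,u,v,t) ↦ (x e^{2h}, y e^{h}, u, v e^{−h}, t e^{−2h}) generated by X₄ = 2x∂ₓ + y∂ᵧ − v∂ᵥ − 2t∂ₜ, where t denotes the temperature variable θ). -/
/-!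
Under `u ↦ c u(ax, by)`, `v ↦ b v(ax, by)`, `θ ↦ c b² θ(ax, by)`, each `x`-derivative brings out a
factor `a` and each `y`-derivative a factor `b`. Streamwise advection `u ∂ₓ`, transverse advection
`v ∂ᵧ` and diffusion `∂ᵧ²` then scale by `ac`, `b²` and `b²`, so they balance as soon as `ac = b²`;
the factor of `θ` is forced by the buoyancy term. The group `g₄` is the case `c = 1`.
-/

/-- The linear map `(x, y) ↦ (a x, b y)`, the action of a scaling group on the independent
variables. -/
noncomputable def dilation (a b : ℝ) : ℝ × ℝ →L[ℝ] ℝ × ℝ :=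
  (a • ContinuousLinearMap.id ℝ ℝ).prodMap (b • ContinuousLinearMap.id ℝ ℝ)

/-- The action `f ↦ c f(a x, b y)` of a scaling group on functions. It is precomposition with the
dilation, so the variables of the graph of `f` are scaled by `a⁻¹` and `b⁻¹`. -/
noncomputable def rescale (c a b : ℝ) (f : ℝ × ℝ → ℝ) : ℝ × ℝ → ℝ :=
  c • (f ∘ dilation a b)

section Rescale

variable {f : ℝ × ℝ → ℝ} (c a b : ℝ)

lemma dilation_apply (p : ℝ × ℝ) : dilation a b p = (a * p.1, b * p.2) := rfl

lemma rescale_apply (f : ℝ × ℝ → ℝ) (p : ℝ × ℝ) :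
    rescale c a b f p = c * f (dilation a b p) := rfl

lemma rescale_eq (f : ℝ × ℝ → ℝ) :
    rescale c a b f = fun p => c * f (a * p.1, b * p.2) := rfl

lemma contDiff_rescale {n : WithTop ℕ∞} (hf : ContDiff ℝ n f) : ContDiff ℝ n (rescale c a b f) :=
  (hf.comp (dilation a b).contDiff).const_smul c

lemma fderiv_rescale_apply {p : ℝ × ℝ} (hf : DifferentiableAt ℝ f (dilation a b p)) (w : ℝ × ℝ) :
    fderiv ℝ (rescale c a b f) p w = c * fderiv ℝ f (dilation a b p) (dilation a b w) := by
  have hderiv : HasFDerivAt (rescale c a b f)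
      (c • (fderiv ℝ f (dilation a b p)).comp (dilation a b)) p :=
    (hf.hasFDerivAt.comp p (dilation a b).hasFDerivAt).const_smul c
  rw [hderiv.fderiv]
  rfl

lemma pdx_rescale (hf : Differentiable ℝ f) :
    pdx (rescale c a b f) = rescale (c * a) a b (pdx f) := by
  funext p
  have hvec : dilation a b (1, 0) = a • (1, 0) := by simp [dilation_apply]
  rw [pdx, fderiv_rescale_apply c a b (hf _), hvec, map_smul, smul_eq_mul, ← mul_assoc,
    rescale_apply, pdx]

lemma pdy_rescale (hf : Differentiable ℝ f) :
    pdy (rescale c a b f) = rescale (c * b) a b (pdy f) := by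
  funext p
  have hvec : dilation a b (0, 1) = b • (0, 1) := by simp [dilation_apply]
  rw [pdy, fderiv_rescale_apply c a b (hf _), hvec, map_smul, smul_eq_mul, ← mul_assoc,
    rescale_apply, pdy]

lemma contDiff_pdy {n : WithTop ℕ∞} (hf : ContDiff ℝ (n + 1) f) : ContDiff ℝ n (pdy f) :=
  (hf.fderiv_right le_rfl).clm_apply contDiff_const

lemma pdy_pdy_rescale (hf : ContDiff ℝ 2 f) :
    pdy (pdy (rescale c a b f)) = rescale (c * b * b) a b (pdy (pdy f)) := by
  have hpdy : Differentiable ℝ (pdy f) :=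
    (contDiff_pdy (n := 1) (by rwa [one_add_one_eq_two])).differentiable one_ne_zero
  rw [pdy_rescale c a b (hf.differentiable two_ne_zero), pdy_rescale (c * b) a b hpdy]

end Rescale

section Scaling

variable {u v : ℝ × ℝ → ℝ} {a b c : ℝ}

lemma continuity_rescale (hu : Differentiable ℝ u) (hv : Differentiable ℝ v)
    (hbal : a * c = b ^ 2) (hcont : ∀ p, pdx u p + pdy v p = 0) (p : ℝ × ℝ) :
    pdx (rescale c a b u) p + pdy (rescale b a b v) p = 0 := by
  rw [pdx_rescale c a b hu, pdy_rescale b a b hv]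
  simp only [rescale_apply]
  linear_combination b ^ 2 * hcont (dilation a b p) + pdx u (dilation a b p) * hbal

lemma advection_diffusion_rescale {f g : ℝ × ℝ → ℝ} {κ : ℝ} (hf : ContDiff ℝ 2 f)
    (hbal : a * c = b ^ 2)
    (heq : ∀ p, u p * pdx f p + v p * pdy f p = κ * pdy (pdy f) p + g p) (m : ℝ) (p : ℝ × ℝ) :
    rescale c a b u p * pdx (rescale m a b f) p + rescale b a b v p * pdy (rescale m a b f) p =
      κ * pdy (pdy (rescale m a b f)) p + rescale (m * b ^ 2) a b g p := by
  have hf' : Differentiable ℝ f := hf.differentiable two_ne_zero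
  rw [pdy_pdy_rescale m a b hf, pdx_rescale m a b hf', pdy_rescale m a b hf']
  simp only [rescale_apply]
  linear_combination m * b ^ 2 * heq (dilation a b p) +
    m * u (dilation a b p) * pdx f (dilation a b p) * hbal

end Scaling

theorem rnc_invariant_under_g4_general {Gr α R Pr : ℝ} {u v θ : ℝ × ℝ → ℝ}
    (hsol : IsRNCSolution Gr α R Pr u v θ) {a b c : ℝ} (hbal : a * c = b ^ 2) :
    IsRNCSolution Gr α R Pr (rescale c a b u) (rescale b a b v) (rescale (c * b ^ 2) a b θ) := by
  obtain ⟨hu, hv, hθ, hcont, hmom, hheat⟩ := hsol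
  refine ⟨contDiff_rescale _ _ _ hu, contDiff_rescale _ _ _ hv, contDiff_rescale _ _ _ hθ,
    continuity_rescale (hu.differentiable two_ne_zero) (hv.differentiable two_ne_zero) hbal hcont,
    fun p => ?_, fun p => ?_⟩
  · have hmom' := advection_diffusion_rescale (κ := 1)
      (g := fun q => Gr * θ q * Real.cos α) hu hbal (by simpa only [one_mul] using hmom) c p
    simp only [rescale_apply] at hmom' ⊢
    linear_combination hmom'
  · have hheat' := advection_diffusion_rescale (κ := 1 / Pr * (1 + 4 * R)) (g := 0) hθ hbal
      (by simpa only [Pi.zero_apply, add_zero] using hheat) (c * b ^ 2) p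
    simpa only [rescale_apply, Pi.zero_apply, mul_zero, add_zero] using hheat'

/-- invariance of the RNC system under the scaling group
`g₄(h) : (x, y, u, v, t) ↦ (x e^{2h}, y e^h, u, v e^{-h}, t e^{-2h})`
generated by `X₄ = 2x∂ₓ + y∂ᵧ - v∂ᵥ - 2t∂ₜ`. -/
theorem rnc_invariant_under_g4 (Gr α R Pr : ℝ) (hPr : Pr ≠ 0)
    (u v θ : ℝ × ℝ → ℝ) (hsol : IsRNCSolution Gr α R Pr u v θ) (h : ℝ) :
    IsRNCSolution Gr α R Pr
      (fun p => u (Real.exp (-2 * h) * p.1, Real.exp (-h) * p.2))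
      (fun p => Real.exp (-h) * v (Real.exp (-2 * h) * p.1, Real.exp (-h) * p.2))
      (fun p => Real.exp (-2 * h) * θ (Real.exp (-2 * h) * p.1, Real.exp (-h) * p.2)) := by
  have hexp : Real.exp (-2 * h) = Real.exp (-h) ^ 2 := by
    rw [← Real.exp_nat_mul, Nat.cast_ofNat, mul_neg, neg_mul]
  simpa only [rescale_eq, one_mul, ← hexp] using
    rnc_invariant_under_g4_general hsol (c := 1) ((mul_one _).trans hexp)
end
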